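/- Let f : ℝ^N → (−∞,∞] be proper, closed and convex, let h : ℝ^N → ℝ be convex and differentiable, and let L > 0. Suppose (x^k) is a sequence in dom f and (m_k) is a sequence of proper, closed, convex functions with 0 ≤ f(x) − m_k(x) ≤ L·D_h(x, x^k) for all x ∈ ℝ^N and all k, and suppose x^{k+1} is a global minimizer of u ↦ m_k(u) + L·D_h(u, x^k) for each k (i.e. step size α = 1/L). Let x* be a global minimizer of f. Then for all k ≥ 1 the O(1/k) convergence rate holds: f(x^k) − f(x*) ≤ L·D_h(x*, x⁰)/k. -/

import Mathlib

open scoped RealInnerProductSpace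
open Filter Topology

/-- The Bregman distance `D_h(x, u) = h x − h u − ⟨∇h u, x − u⟩` associated with `h`. -/
noncomputable def breg {N : ℕ} (h : EuclideanSpace ℝ (Fin N) → ℝ)
    (x u : EuclideanSpace ℝ (Fin N)) : ℝ :=
  h x - h u - ⟪gradient h u, x - u⟫

/-- Convexity for extended-real-valued functions. -/
def ERealConvex {N : ℕ} (f : EuclideanSpace ℝ (Fin N) → EReal) : Prop :=
  ∀ x y : EuclideanSpace ℝ (Fin N), ∀ a b : ℝ, 0 ≤ a → 0 ≤ b → a + b = 1 →
    f (a • x + b • y) ≤ (a : EReal) * f x + (b : EReal) * f y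

/-!
The point `x (k + 1)` minimizes the sum of a convex model and the smooth function
`L * D_h(·, x k)`, so the linearization of the smooth part at `x (k + 1)` gives, for every `u`,
`m_k(x (k + 1)) + L * D_h(x (k + 1), x k) + L * D_h(u, x (k + 1)) ≤ m_k(u) + L * D_h(u, x k)`.
By the two model bounds the first two terms dominate `f(x (k + 1))`, and `m_k(u) ≤ f(u)`.
Hence `f(x (k + 1)) + L * D_h(u, x (k + 1)) ≤ f(u) + L * D_h(u, x k)`. With `u = x k` the values
`f(x k)` decrease; summing over `k` for fixed `u` makes the Bregman terms telescope. The model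
bounds also make `L * D_h(u, x k)` nonnegative wherever `f(u)` is finite.
-/

section BregmanDistance

variable {E : Type*} [NormedAddCommGroup E] [NormedSpace ℝ E]

/-- The Bregman distance `D_h(x, u)` on a normed space, with the Fréchet derivative of `h` at `u`
in place of the inner product with the gradient. -/
noncomputable def bregmanDist (h : E → ℝ) (x u : E) : ℝ :=
  h x - h u - fderiv ℝ h u (x - u)

theorem breg_eq_bregmanDist {N : ℕ} (h : EuclideanSpace ℝ (Fin N) → ℝ)
    (x u : EuclideanSpace ℝ (Fin N)) : breg h x u = bregmanDist h x u := by
  rw [breg, bregmanDist, inner_gradient_left]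

theorem bregmanDist_self (h : E → ℝ) (x : E) : bregmanDist h x x = 0 := by
  simp [bregmanDist]

theorem bregmanDist_add_bregmanDist (h : E → ℝ) (u p y : E) :
    bregmanDist h u p + bregmanDist h p y =
      bregmanDist h u y + (fderiv ℝ h y - fderiv ℝ h p) (u - p) := by
  simp only [bregmanDist, map_sub, sub_apply]
  ring

theorem hasFDerivAt_bregmanDist {h : E → ℝ} {p : E}
    (hh : DifferentiableAt ℝ h p) (y : E) :
    HasFDerivAt (fun u => bregmanDist h u y) (fderiv ℝ h p - fderiv ℝ h y) p := by
  have hlin : HasFDerivAt (fun u => fderiv ℝ h y (u - y)) (fderiv ℝ h y) p :=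
    (fderiv ℝ h y).hasFDerivAt.comp p ((hasFDerivAt_id p).sub_const y)
  exact (hh.hasFDerivAt.sub_const (h y)).sub hlin

end BregmanDistance

section CompositeMinimization

/-- The epigraph of an extended-real-valued function; only its real heights are recorded, so that it
lies in a real vector space and its convexity is the convexity of the function. -/
def epigraph {E : Type*} (m : E → EReal) : Set (E × ℝ) :=
  {q | m q.1 ≤ q.2}

theorem ERealConvex.convex_epigraph {N : ℕ} {m : EuclideanSpace ℝ (Fin N) → EReal}
    (hm : ERealConvex m) : Convex ℝ (epigraph m) := by
  rintro ⟨y, s⟩ hs ⟨z, t⟩ ht a b ha hb hab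
  calc m (a • y + b • z)
      ≤ a * m y + b * m z := hm y z a b ha hb hab
    _ ≤ a * s + b * t :=
        add_le_add (mul_le_mul_of_nonneg_left hs (EReal.coe_nonneg.2 ha))
          (mul_le_mul_of_nonneg_left ht (EReal.coe_nonneg.2 hb))

variable {E : Type*} [NormedAddCommGroup E] [NormedSpace ℝ E] {m : E → EReal} {p u : E} {a b : ℝ}

/-- Fermat's rule for the differentiable function `q ↦ q.2 + g q.1` on the convex set
`epigraph m`. -/
theorem le_add_fderiv_sub_of_forall_add_le {g : E → ℝ} {g' : E →L[ℝ] ℝ}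
    (hm : Convex ℝ (epigraph m)) (hg : HasFDerivAt g g' p)
    (hmin : ∀ v, m p + (g p : EReal) ≤ m v + (g v : EReal))
    (ha : m p = a) (hb : m u ≤ b) : a ≤ b + g' (u - p) := by
  have hpa : (p, a) ∈ epigraph m := ha.le
  have hminOn : IsMinOn (fun q : E × ℝ => q.2 + g q.1) (epigraph m) (p, a) := by
    rintro ⟨v, s⟩ (hv : m v ≤ s)
    have hle : (a : EReal) + g p ≤ s + g v :=
      ha ▸ (hmin v).trans (add_le_add_left hv _)
    exact mod_cast hle
  have hderiv : HasFDerivAt (fun q : E × ℝ => q.2 + g q.1)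
      (.snd ℝ E ℝ + g' ∘L .fst ℝ E ℝ) (p, a) :=
    hasFDerivAt_snd.add (HasFDerivAt.comp (p, a) hg hasFDerivAt_fst)
  have hnonneg : 0 ≤ (b - a) + g' (u - p) :=
    hminOn.localize.hasFDerivWithinAt_nonneg hderiv.hasFDerivWithinAt
      (sub_mem_posTangentConeAt_of_segment_subset (hm.segment_subset hpa (show (u, b) ∈ _ from hb)))
  linarith

theorem bregmanDist_proximal_three_point {h : E → ℝ} {L : ℝ} {y : E}
    (hm : Convex ℝ (epigraph m)) (hh : DifferentiableAt ℝ h p)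
    (hmin : ∀ v, m p + ((L * bregmanDist h p y : ℝ) : EReal) ≤
      m v + ((L * bregmanDist h v y : ℝ) : EReal))
    (ha : m p = a) (hb : m u ≤ b) :
    a + L * bregmanDist h p y + L * bregmanDist h u p ≤ b + L * bregmanDist h u y := by
  have hopt : a ≤ b + L * (fderiv ℝ h p - fderiv ℝ h y) (u - p) :=
    le_add_fderiv_sub_of_forall_add_le hm ((hasFDerivAt_bregmanDist hh y).const_mul L) hmin ha hb
  have hthree := congrArg (L * ·) (bregmanDist_add_bregmanDist h u p y)
  simp only [sub_apply] at hopt hthree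
  linarith

end CompositeMinimization

section Rate

theorem mul_sub_add_le_of_antitone {φ d : ℕ → ℝ} {c : ℝ} (hφ : Antitone φ)
    (hd : ∀ k, φ (k + 1) + d (k + 1) ≤ c + d k) (k : ℕ) :
    k * (φ k - c) + d k ≤ d 0 := by
  induction k with
  | zero => simp
  | succ k ih =>
    have hmono : k * φ (k + 1) ≤ k * φ k :=
      mul_le_mul_of_nonneg_left (hφ k.le_succ) k.cast_nonneg
    have := hd k
    push_cast
    linarith

theorem exists_coe_eq_and_le_add_of_sub_le {t : EReal} {r c : ℝ} (hle : t ≤ r)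
    (hgap : (r : EReal) - t ≤ c) : ∃ a : ℝ, t = a ∧ r ≤ a + c := by
  induction t with
  | bot => simp at hgap
  | top => simp at hle
  | coe a => exact ⟨a, rfl, sub_le_iff_le_add'.1 (mod_cast hgap)⟩

variable {E : Type*} [NormedAddCommGroup E] [NormedSpace ℝ E]
  {f : E → EReal} {h : E → ℝ} {L : ℝ}

theorem add_bregmanDist_le_of_model_step {m : E → EReal} {y p u : E} {r s : ℝ}
    (hm : Convex ℝ (epigraph m)) (hh : DifferentiableAt ℝ h p)
    (hle : ∀ z, m z ≤ f z) (hgap : f p - m p ≤ ((L * bregmanDist h p y : ℝ) : EReal))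
    (hmin : ∀ v, m p + ((L * bregmanDist h p y : ℝ) : EReal) ≤
      m v + ((L * bregmanDist h v y : ℝ) : EReal))
    (hp : f p = r) (hu : f u = s) :
    r + L * bregmanDist h u p ≤ s + L * bregmanDist h u y := by
  obtain ⟨a, ha, hra⟩ := exists_coe_eq_and_le_add_of_sub_le (hp ▸ hle p) (hp ▸ hgap)
  have := bregmanDist_proximal_three_point hm hh hmin ha ((hle u).trans hu.le)
  linarith

theorem convex_convergence_rate_general (hfbot : ∀ z, f z ≠ ⊥)
    {x : ℕ → E} (hdom : ∀ k, f (x k) ≠ ⊤) (hh : ∀ k, DifferentiableAt ℝ h (x k))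
    {m : ℕ → E → EReal} (hmconv : ∀ k, Convex ℝ (epigraph (m k)))
    (hmodel : ∀ k z, m k z ≤ f z ∧
      f z - m k z ≤ ((L * bregmanDist h z (x k) : ℝ) : EReal))
    (hmin : ∀ k v, m k (x (k + 1)) + ((L * bregmanDist h (x (k + 1)) (x k) : ℝ) : EReal) ≤
      m k v + ((L * bregmanDist h v (x k) : ℝ) : EReal))
    (u : E) {k : ℕ} (hk : 1 ≤ k) :
    f (x k) - f u ≤ ((L * bregmanDist h u (x 0) / k : ℝ) : EReal) := by
  rcases eq_or_ne (f u) ⊤ with hu | hu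
  · simp [hu]
  have hreal : ∀ {z}, f z ≠ ⊤ → f z = ((f z).toReal : EReal) := fun {z} hz =>
    (EReal.coe_toReal hz (hfbot z)).symm
  have hdescent : ∀ k {z}, f z ≠ ⊤ → (f (x (k + 1))).toReal + L * bregmanDist h z (x (k + 1)) ≤
      (f z).toReal + L * bregmanDist h z (x k) := fun k {z} hz =>
    add_bregmanDist_le_of_model_step (hmconv k) (hh (k + 1)) (fun v => (hmodel k v).1)
      (hmodel k (x (k + 1))).2 (hmin k) (hreal (hdom (k + 1))) (hreal hz)
  have hnonneg : ∀ k {z}, f z ≠ ⊤ → 0 ≤ L * bregmanDist h z (x k) := fun k {z} hz =>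
    EReal.coe_nonneg.1 <|
      ((EReal.sub_nonneg (.inl hz) (.inl (hfbot z))).2 (hmodel k z).1).trans (hmodel k z).2
  have hanti : Antitone fun k => (f (x k)).toReal := antitone_nat_of_succ_le fun k => by
    have := hdescent k (hdom k)
    rw [bregmanDist_self, mul_zero] at this
    linarith [hnonneg (k + 1) (hdom k)]
  have hsum := mul_sub_add_le_of_antitone (d := fun k => L * bregmanDist h u (x k)) hanti
    (fun k => hdescent k hu) k
  have hrate : (f (x k)).toReal - (f u).toReal ≤ L * bregmanDist h u (x 0) / k := by
    rw [le_div_iff₀' (by exact_mod_cast hk)]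
    linarith [hnonneg k hu]
  rw [hreal (hdom k), hreal hu]
  exact_mod_cast hrate

end Rate

/-- **O(1/k) convergence rate in the convex setting.** If `f` is proper closed convex,
each model `m_k` satisfies `0 ≤ f − m_k ≤ L·D_h(·, x^k)`, `x^{k+1}` globally minimizes
`u ↦ m_k u + L·D_h(u, x^k)` (step size `α = 1/L`), and `x*` minimizes `f`, then
`f(x^k) − f(x*) ≤ L·D_h(x*, x⁰)/k` for all `k ≥ 1`. -/
theorem convex_convergence_rate (N : ℕ)
    (f : EuclideanSpace ℝ (Fin N) → EReal)
    (hfbot : ∀ z, f z ≠ ⊥) (hfproper : ∃ z, f z ≠ ⊤)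
    (hfclosed : LowerSemicontinuous f) (hfconv : ERealConvex f)
    (h : EuclideanSpace ℝ (Fin N) → ℝ)
    (hhconv : ConvexOn ℝ Set.univ h) (hhdiff : Differentiable ℝ h)
    (L : ℝ) (hL : 0 < L)
    (x : ℕ → EuclideanSpace ℝ (Fin N)) (hdom : ∀ k, f (x k) ≠ ⊤)
    (m : ℕ → EuclideanSpace ℝ (Fin N) → EReal)
    (hmbot : ∀ k z, m k z ≠ ⊥) (hmproper : ∀ k, ∃ z, m k z ≠ ⊤)
    (hmclosed : ∀ k, LowerSemicontinuous (m k)) (hmconv : ∀ k, ERealConvex (m k))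
    (hmodel : ∀ k z, m k z ≤ f z ∧ f z - m k z ≤ ((L * breg h z (x k) : ℝ) : EReal))
    (hmin : ∀ k u, m k (x (k+1)) + ((L * breg h (x (k+1)) (x k) : ℝ) : EReal) ≤
                   m k u + ((L * breg h u (x k) : ℝ) : EReal))
    (xstar : EuclideanSpace ℝ (Fin N)) (hstar : ∀ z, f xstar ≤ f z) :
    ∀ k : ℕ, 1 ≤ k →
      f (x k) - f xstar ≤ ((L * breg h xstar (x 0) / (k : ℝ) : ℝ) : EReal) := by
  simp only [breg_eq_bregmanDist] at hmodel hmin ⊢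
  exact fun k hk => convex_convergence_rate_general hfbot hdom (fun k => hhdiff (x k))
    (fun k => (hmconv k).convex_epigraph) hmodel hmin xstar hk
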